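/- Let N ≥ 1, a ≥ 0, b > 0, and set α = a+b−1 and β = b−1. For each κ > 0 let X_κ be a random vector with distribution μ_κ (the β-Jacobi ensemble), and let z = (z_1,...,z_N), where z_1 < ... < z_N are the ordered zeros of the Jacobi polynomial P_N^{(α,β)}. Then X_κ converges to z in probability as κ → ∞, i.e., for every ε > 0, lim_{κ→∞} μ_κ({x ∈ A : ‖x − z‖ > ε}) = 0. -/

import Mathlib

open MeasureTheory Filter Real Finset Topology

/-!
The density of the ensemble is `F ^ κ * W`, where `F` is the product of the differences and of the
factors `(1 - xᵢ) ^ ((α + 1) / 2) * (1 + xᵢ) ^ ((β + 1) / 2)`, and `W` is integrable and independent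
of `κ`. By Laplace's principle the measures concentrate at the unique maximum of `F`.

That this maximum is the vector of zeros of the Jacobi polynomial `P` is Stieltjes' electrostatic
interpretation. Write `P = (X - zᵢ) * G` and let `w` be the Jacobi weight. Orthogonality gives the
quadrature formula `∫ G * Q * w = Q(zᵢ) * ∫ G * w` for `deg Q ≤ deg P`; applying it to the
polynomial `Q` with `((1 - x ^ 2) * G ^ 2 * w)' = G * Q * w` yields `Q(zᵢ) = 0`, which says that `z`
is a critical point of `log F`. Since `F` is a product of powers of affine functions,
`u ≤ v * exp ((u - v) / v)` applied to each factor turns criticality into `F y < F z` for `y ≠ z`.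
-/

section LaplacePrinciple

variable {X : Type*} {A S V : Set X} {F W : X → ℝ}

lemma exists_mem_Ico_forall_le_of_notMem_closure [TopologicalSpace X] {z : X} {c : ℝ}
    (hA : IsCompact A) (hF : ContinuousOn F A) (hmax : ∀ y ∈ A, y ≠ z → F y < F z) (hSA : S ⊆ A)
    (hzS : z ∉ closure S) (hc : c < F z) : ∃ M ∈ Set.Ico c (F z), ∀ x ∈ S, F x ≤ M := by
  rcases S.eq_empty_or_nonempty with rfl | ⟨x₀, hx₀⟩
  · exact ⟨c, ⟨le_rfl, hc⟩, by simp⟩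
  obtain ⟨y, ⟨hyS, hyA⟩, hy⟩ := (hA.inter_left isClosed_closure).exists_isMaxOn
    ⟨x₀, subset_closure hx₀, hSA hx₀⟩ (hF.mono Set.inter_subset_right)
  have hyz : y ≠ z := fun h => hzS (h ▸ hyS)
  exact ⟨max c (F y), ⟨le_max_left _ _, max_lt hc (hmax y hyA hyz)⟩,
    fun x hx => (hy ⟨subset_closure hx, hSA hx⟩).trans (le_max_right _ _)⟩

variable [MeasurableSpace X] {μ : Measure X}

lemma setIntegral_rpow_mul_le {M t : ℝ} (ht : 0 ≤ t) (hS : MeasurableSet S)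
    (hint : IntegrableOn (fun x => F x ^ t * W x) S μ) (hW : IntegrableOn W S μ)
    (hF0 : ∀ x ∈ S, 0 ≤ F x) (hW0 : ∀ x ∈ S, 0 ≤ W x) (hFM : ∀ x ∈ S, F x ≤ M) :
    ∫ x in S, F x ^ t * W x ∂μ ≤ M ^ t * ∫ x in S, W x ∂μ := by
  rw [← integral_const_mul]
  exact setIntegral_mono_on hint (hW.const_mul _) hS fun x hx =>
    mul_le_mul_of_nonneg_right (rpow_le_rpow (hF0 x hx) (hFM x hx) ht) (hW0 x hx)

lemma le_setIntegral_rpow_mul {m t : ℝ} (ht : 0 ≤ t) (hm : 0 ≤ m) (hS : MeasurableSet S)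
    (hint : IntegrableOn (fun x => F x ^ t * W x) S μ) (hW : IntegrableOn W S μ)
    (hW0 : ∀ x ∈ S, 0 ≤ W x) (hmF : ∀ x ∈ S, m ≤ F x) :
    m ^ t * ∫ x in S, W x ∂μ ≤ ∫ x in S, F x ^ t * W x ∂μ := by
  rw [← integral_const_mul]
  exact setIntegral_mono_on (hW.const_mul _) hint hS fun x hx =>
    mul_le_mul_of_nonneg_right (rpow_le_rpow hm (hmF x hx) ht) (hW0 x hx)

lemma tendsto_setIntegral_rpow_mul_div_of_le_of_le {M m : ℝ} (hA : MeasurableSet A)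
    (hS : MeasurableSet S) (hV : MeasurableSet V) (hSA : S ⊆ A) (hVA : V ⊆ A)
    (hint : ∀ t : ℝ, 0 ≤ t → IntegrableOn (fun x => F x ^ t * W x) A μ)
    (hF0 : ∀ x ∈ A, 0 ≤ F x) (hW0 : ∀ x ∈ A, 0 ≤ W x) (hM : 0 ≤ M) (hMm : M < m)
    (hFM : ∀ x ∈ S, F x ≤ M) (hmF : ∀ x ∈ V, m ≤ F x) (hWV : 0 < ∫ x in V, W x ∂μ) :
    Tendsto (fun t : ℝ => (∫ x in S, F x ^ t * W x ∂μ) / ∫ x in A, F x ^ t * W x ∂μ)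
      atTop (𝓝 0) := by
  have hm : 0 < m := hM.trans_lt hMm
  have hW : IntegrableOn W A μ := by simpa using hint 0 le_rfl
  have hFW : ∀ t : ℝ, ∀ x ∈ A, 0 ≤ F x ^ t * W x := fun t x hx =>
    mul_nonneg (rpow_nonneg (hF0 x hx) t) (hW0 x hx)
  have hlim : Tendsto
      (fun t : ℝ => (∫ x in S, W x ∂μ) / (∫ x in V, W x ∂μ) * (M / m) ^ t) atTop (𝓝 0) := by
    simpa using (tendsto_rpow_atTop_of_base_lt_one (M / m)
      (neg_one_lt_zero.trans_le (by positivity)) ((div_lt_one hm).2 hMm)).const_mul _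
  refine squeeze_zero' (Eventually.of_forall fun t => ?_) ?_ hlim
  · exact div_nonneg (setIntegral_nonneg hS fun x hx => hFW t x (hSA hx))
      (setIntegral_nonneg hA (hFW t))
  filter_upwards [eventually_ge_atTop 0] with t ht
  have hnum : ∫ x in S, F x ^ t * W x ∂μ ≤ M ^ t * ∫ x in S, W x ∂μ :=
    setIntegral_rpow_mul_le ht hS ((hint t ht).mono_set hSA) (hW.mono_set hSA)
      (fun x hx => hF0 x (hSA hx)) (fun x hx => hW0 x (hSA hx)) hFM
  have hden : m ^ t * ∫ x in V, W x ∂μ ≤ ∫ x in A, F x ^ t * W x ∂μ :=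
    (le_setIntegral_rpow_mul ht hm.le hV ((hint t ht).mono_set hVA) (hW.mono_set hVA)
      (fun x hx => hW0 x (hVA hx)) hmF).trans
      (setIntegral_mono_set (hint t ht) (ae_restrict_of_forall_mem hA (hFW t)) hVA.eventuallyLE)
  have hWS : 0 ≤ ∫ x in S, W x ∂μ := setIntegral_nonneg hS fun x hx => hW0 x (hSA hx)
  calc _ ≤ (M ^ t * ∫ x in S, W x ∂μ) / (m ^ t * ∫ x in V, W x ∂μ) :=
        div_le_div₀ (by positivity) hnum (by positivity) hden
    _ = _ := by rw [div_rpow hM hm.le, mul_comm (M ^ t), mul_comm (m ^ t), mul_div_mul_comm]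

variable [TopologicalSpace X] {z : X}

theorem tendsto_setIntegral_rpow_mul_div_of_unique_max [T2Space X] [OpensMeasurableSpace X]
    (hA : IsCompact A) (hF : ContinuousOn F A) (hW : IntegrableOn W A μ)
    (hF0 : ∀ x ∈ A, 0 ≤ F x) (hW0 : ∀ x ∈ A, 0 ≤ W x) (hzA : z ∈ A) (hFz : 0 < F z)
    (hWz : ∀ U, IsOpen U → z ∈ U → 0 < ∫ x in A ∩ U, W x ∂μ)
    (hmax : ∀ y ∈ A, y ≠ z → F y < F z) (hS : MeasurableSet S) (hSA : S ⊆ A)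
    (hzS : z ∉ closure S) :
    Tendsto (fun t : ℝ => (∫ x in S, F x ^ t * W x ∂μ) / ∫ x in A, F x ^ t * W x ∂μ)
      atTop (𝓝 0) := by
  obtain ⟨M, ⟨hM0, hMz⟩, hM⟩ :=
    exists_mem_Ico_forall_le_of_notMem_closure hA hF hmax hSA hzS hFz
  obtain ⟨m, hMm, hmz⟩ := exists_between hMz
  obtain ⟨U, hU, hUm⟩ := continuousOn_iff'.1 hF (Set.Ioi m) isOpen_Ioi
  have hUF : ∀ x ∈ A, x ∈ U ↔ m < F x := fun x hx => by
    simpa [hx] using (Set.ext_iff.1 hUm x).symm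
  exact tendsto_setIntegral_rpow_mul_div_of_le_of_le hA.measurableSet hS
    (hA.measurableSet.inter hU.measurableSet) hSA Set.inter_subset_left
    (fun t ht => hW.continuousOn_mul (hF.rpow_const fun _ _ => Or.inr ht) hA)
    hF0 hW0 hM0 hMm hM (fun x hx => ((hUF x hx.1).1 hx.2).le) (hWz U hU ((hUF z hzA).2 hmz))

lemma setIntegral_pos_of_isOpen_of_pos [μ.IsOpenPosMeasure]
    (hA : MeasurableSet A) (hV : IsOpen V) (hVne : V.Nonempty) (hVA : V ⊆ A)
    (hW : IntegrableOn W A μ) (hW0 : ∀ x ∈ A, 0 ≤ W x) (hWV : ∀ x ∈ V, 0 < W x) :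
    0 < ∫ x in A, W x ∂μ :=
  (setIntegral_pos_iff_support_of_nonneg_ae (ae_restrict_of_forall_mem hA hW0) hW).2
    ((hV.measure_pos μ hVne).trans_le
      (measure_mono fun x hx => ⟨(hWV x hx).ne', hVA hx⟩))

end LaplacePrinciple

section OrthogonalPolynomials

open Polynomial

/-- Orthogonality of `P` to all polynomials of lower degree with respect to the bilinear form
`(P, Q) ↦ L (P * Q)` of a linear functional `L`, such as integration against a weight. -/
def IsOrthogonalToLowerDegree {R : Type*} [CommSemiring R] (L : R[X] →ₗ[R] R) (P : R[X]) : Prop :=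
  ∀ Q : R[X], Q.natDegree < P.natDegree → L (P * Q) = 0

variable {R : Type*} [CommRing R] {L : R[X] →ₗ[R] R} {G : R[X]} {z : R}

lemma IsOrthogonalToLowerDegree.map_mul_eq_eval_mul {Q : R[X]}
    (hG : IsOrthogonalToLowerDegree L ((X - C z) * G))
    (hdeg : 0 < ((X - C z) * G).natDegree) (hQ : Q.natDegree ≤ ((X - C z) * G).natDegree) :
    L (G * Q) = Q.eval z * L G := by
  nontriviality R
  have hdiv : C (Q.eval z) + (X - C z) * (Q /ₘ (X - C z)) = Q := by
    rw [← modByMonic_X_sub_C_eq_C_eval, modByMonic_add_div]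
  have hquot : (Q /ₘ (X - C z)).natDegree < ((X - C z) * G).natDegree := by
    rw [natDegree_divByMonic Q (monic_X_sub_C z), natDegree_X_sub_C]
    lia
  have hGQ : G * Q = Q.eval z • G + (X - C z) * G * (Q /ₘ (X - C z)) := by
    rw [smul_eq_C_mul]
    linear_combination -G * hdiv
  rw [hGQ, map_add, map_smul, hG _ hquot, add_zero, smul_eq_mul]

/-- `L (φ * H' + ψ * H) = 0` is Pearson's equation `(φ w)' = ψ w` for the weight `w` of `L`, tested
against `H`; the quadrature formula is applied to it with `H = G * G`. -/
theorem IsOrthogonalToLowerDegree.eval_eq_zero_of_pearson [IsDomain R] {φ ψ : R[X]}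
    (hφ : φ.natDegree ≤ 2) (hψ : ψ.natDegree ≤ 1)
    (hpearson : ∀ H : R[X], L (φ * derivative H + ψ * H) = 0)
    (hG : IsOrthogonalToLowerDegree L ((X - C z) * G)) (hGG : L (G * G) ≠ 0) :
    (ψ * G + 2 * φ * derivative G).eval z = 0 := by
  have hG0 : G ≠ 0 := by rintro rfl; simp at hGG
  have hdeg : ((X - C z) * G).natDegree = 1 + G.natDegree := by
    rw [natDegree_mul (X_sub_C_ne_zero z) hG0, natDegree_X_sub_C]
  have hLG : L G ≠ 0 := fun h => hGG (by
    rw [hG.map_mul_eq_eval_mul (by lia) (by lia), h, mul_zero])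
  have hψG : (ψ * G).natDegree ≤ 1 + G.natDegree := natDegree_mul_le_of_le hψ le_rfl
  have hφG : (2 * φ * derivative G).natDegree ≤ 1 + G.natDegree := by
    rcases Nat.eq_zero_or_pos G.natDegree with h | h
    · simp [derivative_of_natDegree_zero h]
    · have h2φ : (2 * φ).natDegree ≤ 2 := by
        simpa using natDegree_mul_le_of_le (natDegree_ofNat (R := R) 2).le hφ
      have := natDegree_mul_le_of_le h2φ (natDegree_derivative_le G)
      lia
  have hquad := hG.map_mul_eq_eval_mul (by lia)
    ((natDegree_add_le_of_degree_le hψG hφG).trans hdeg.ge)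
  have hL : L (G * (ψ * G + 2 * φ * derivative G)) = 0 := by
    rw [← hpearson (G * G), derivative_mul]
    congr 1
    ring
  exact (mul_eq_zero.1 (hquad.symm.trans hL)).resolve_right hLG

end OrthogonalPolynomials

section Nodal

open Polynomial Lagrange

variable {K ι : Type*} [Field K] {v : ι → K}

lemma eval_derivative_nodal_eq_mul_sum {s : Finset ι} {x : K} (hx : ∀ j ∈ s, x ≠ v j) :
    (derivative (nodal s v)).eval x = (nodal s v).eval x * ∑ j ∈ s, 1 / (x - v j) := by
  classical
  rw [derivative_nodal, eval_finsetSum, mul_sum]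
  refine sum_congr rfl fun j hj => ?_
  have : x - v j ≠ 0 := sub_ne_zero.2 (hx j hj)
  rw [nodal_eq_mul_nodal_erase hj, eval_mul, eval_sub, eval_X, eval_C]
  field_simp

lemma eq_C_leadingCoeff_mul_nodal [Fintype ι] {P : K[X]} (hP : P.natDegree = Fintype.card ι)
    (hv : Function.Injective v) (hroot : ∀ i, P.eval (v i) = 0) :
    P = C P.leadingCoeff * nodal univ v := by
  refine eq_of_degree_le_of_eval_index_eq univ hv.injOn (natDegree_le_iff_degree_le.1 hP.le) ?_
    ?_ ?_
  · rcases eq_or_ne P 0 with rfl | hP0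
    · simp
    · rw [degree_C_mul (leadingCoeff_ne_zero.2 hP0), degree_nodal, degree_eq_natDegree hP0, hP,
        card_univ]
  · simp [nodal_monic.leadingCoeff]
  · simp [hroot, eval_nodal_at_node]

lemma IsOrthogonalToLowerDegree.nodal {L : K[X] →ₗ[K] K} [Fintype ι] {P : K[X]}
    (hP : IsOrthogonalToLowerDegree L P) (hP0 : P ≠ 0) (hdeg : P.natDegree = Fintype.card ι)
    (hv : Function.Injective v) (hroot : ∀ i, P.eval (v i) = 0) :
    IsOrthogonalToLowerDegree L (nodal univ v) := by
  intro Q hQ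
  have hPQ := hP Q (by rwa [hdeg, ← card_univ, ← natDegree_nodal (s := univ) (v := v)])
  rw [eq_C_leadingCoeff_mul_nodal hdeg hv hroot, mul_assoc, ← smul_eq_C_mul, map_smul,
    smul_eq_mul] at hPQ
  exact (mul_eq_zero.1 hPQ).resolve_left (leadingCoeff_ne_zero.2 hP0)

theorem IsOrthogonalToLowerDegree.stieltjes_relation {L : K[X] →ₗ[K] K} [Fintype ι]
    [DecidableEq ι] {φ ψ : K[X]} (hφ : φ.natDegree ≤ 2) (hψ : ψ.natDegree ≤ 1)
    (hpearson : ∀ H : K[X], L (φ * derivative H + ψ * H) = 0)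
    (hL : ∀ G : K[X], G ≠ 0 → L (G * G) ≠ 0) (hv : Function.Injective v)
    (hP : IsOrthogonalToLowerDegree L (Lagrange.nodal univ v)) (i : ι) :
    ψ.eval (v i) + 2 * φ.eval (v i) * ∑ j ∈ univ.erase i, 1 / (v i - v j) = 0 := by
  have hne : ∀ j ∈ univ.erase i, v i ≠ v j := fun j hj h => ne_of_mem_erase hj (hv h).symm
  rw [nodal_eq_mul_nodal_erase (mem_univ i)] at hP
  have heval := hP.eval_eq_zero_of_pearson hφ hψ hpearson (hL _ nodal_ne_zero)
  rw [eval_add, eval_mul, eval_mul, eval_mul, eval_ofNat,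
    eval_derivative_nodal_eq_mul_sum hne] at heval
  refine (mul_eq_zero.1 ?_).resolve_left (eval_nodal_not_at_node hne)
  linear_combination heval

end Nodal

section JacobiWeight

open Polynomial

/-- The Jacobi weight on `[-1, 1]`. At an endpoint where the exponent is negative it takes the junk
value `0`. -/
noncomputable def jacobiWeight (α β x : ℝ) : ℝ := (1 - x) ^ α * (1 + x) ^ β

variable {α β : ℝ}

lemma jacobiWeight_nonneg {x : ℝ} (hx : x ∈ Set.Icc (-1 : ℝ) 1) : 0 ≤ jacobiWeight α β x :=
  mul_nonneg (rpow_nonneg (by linarith [hx.2]) _) (rpow_nonneg (by linarith [hx.1]) _)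

lemma jacobiWeight_pos {x : ℝ} (hx : x ∈ Set.Ioo (-1 : ℝ) 1) : 0 < jacobiWeight α β x :=
  mul_pos (rpow_pos_of_pos (by linarith [hx.2]) _) (rpow_pos_of_pos (by linarith [hx.1]) _)

lemma continuous_jacobiWeight (hα : 0 ≤ α) (hβ : 0 ≤ β) : Continuous (jacobiWeight α β) :=
  ((continuous_const.sub continuous_id).rpow_const fun _ => Or.inr hα).mul
    ((continuous_const.add continuous_id).rpow_const fun _ => Or.inr hβ)

lemma jacobiWeight_rpow_mul_jacobiWeight {α' β' t x : ℝ} (hx : x ∈ Set.Icc (-1 : ℝ) 1)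
    (hα : α * t + α' ≠ 0) (hβ : β * t + β' ≠ 0) :
    jacobiWeight α β x ^ t * jacobiWeight α' β' x =
      jacobiWeight (α * t + α') (β * t + β') x := by
  have hx₁ : 0 ≤ 1 - x := by linarith [hx.2]
  have hx₂ : 0 ≤ 1 + x := by linarith [hx.1]
  simp only [jacobiWeight]
  rw [mul_rpow (rpow_nonneg hx₁ _) (rpow_nonneg hx₂ _), rpow_add' hx₁ hα, rpow_add' hx₂ hβ,
    rpow_mul hx₁, rpow_mul hx₂]
  ring

lemma integrableOn_jacobiWeight (hα : -1 < α) (hβ : -1 < β) :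
    IntegrableOn (jacobiWeight α β) (Set.Icc (-1) 1) := by
  have hleft : IntervalIntegrable (jacobiWeight α β) volume (-1) 0 := by
    have hrpow : IntervalIntegrable (fun x : ℝ => (1 + x) ^ β) volume (-1) 0 := by
      simpa using (intervalIntegral.intervalIntegrable_rpow' (a := 0) (b := 1) hβ).comp_add_left 1
    refine hrpow.continuousOn_mul (ContinuousOn.rpow_const (by fun_prop) fun x hx => Or.inl ?_)
    rw [Set.uIcc_of_le (by norm_num)] at hx
    linarith [hx.2]
  have hright : IntervalIntegrable (jacobiWeight α β) volume 0 1 := by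
    have hrpow : IntervalIntegrable (fun x : ℝ => (1 - x) ^ α) volume 0 1 := by
      simpa using
        ((intervalIntegral.intervalIntegrable_rpow' (a := 0) (b := 1) hα).comp_sub_left 1).symm
    refine hrpow.mul_continuousOn (ContinuousOn.rpow_const (by fun_prop) fun x hx => Or.inl ?_)
    rw [Set.uIcc_of_le (by norm_num)] at hx
    linarith [hx.1]
  exact (intervalIntegrable_iff_integrableOn_Icc_of_le (by norm_num)).1 (hleft.trans hright)

lemma integrableOn_eval_mul_jacobiWeight (hα : -1 < α) (hβ : -1 < β) (Q : ℝ[X]) :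
    IntegrableOn (fun x => Q.eval x * jacobiWeight α β x) (Set.Icc (-1) 1) :=
  (integrableOn_jacobiWeight hα hβ).continuousOn_mul Q.continuous.continuousOn isCompact_Icc

/-- Integration of polynomials against the Jacobi weight, as a linear functional; the bounds on the
exponents make the weight integrable. -/
noncomputable def jacobiFunctional (hα : -1 < α) (hβ : -1 < β) : ℝ[X] →ₗ[ℝ] ℝ where
  toFun Q := ∫ x in Set.Ioo (-1 : ℝ) 1, Q.eval x * jacobiWeight α β x
  map_add' Q T := by
    have hint (Q : ℝ[X]) :=
      (integrableOn_eval_mul_jacobiWeight hα hβ Q).mono_set Set.Ioo_subset_Icc_self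
    simp only [eval_add, add_mul]
    exact integral_add (hint Q) (hint T)
  map_smul' c Q := by
    simp only [eval_smul, smul_eq_mul, mul_assoc, integral_const_mul, RingHom.id_apply]

lemma jacobiFunctional_apply (hα : -1 < α) (hβ : -1 < β) (Q : ℝ[X]) :
    jacobiFunctional hα hβ Q = ∫ x in Set.Ioo (-1 : ℝ) 1, Q.eval x * jacobiWeight α β x :=
  rfl

lemma jacobiFunctional_mul_self_pos (hα : -1 < α) (hβ : -1 < β) {G : ℝ[X]} (hG : G ≠ 0) :
    0 < jacobiFunctional hα hβ (G * G) := by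
  have hne : (Set.Ioo (-1 : ℝ) 1 ∩ {x | G.eval x ≠ 0}).Nonempty := by
    obtain ⟨x, hx, hroot⟩ := (Set.Ioo_infinite (by norm_num : (-1 : ℝ) < 1)).exists_notMem_finset
      G.roots.toFinset
    exact ⟨x, hx, by simpa [hG] using hroot⟩
  refine setIntegral_pos_of_isOpen_of_pos measurableSet_Ioo
    (isOpen_Ioo.inter (isOpen_ne_fun G.continuous continuous_const)) hne Set.inter_subset_left
    ((integrableOn_eval_mul_jacobiWeight hα hβ _).mono_set Set.Ioo_subset_Icc_self) ?_ ?_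
  · intro x hx
    rw [eval_mul]
    exact mul_nonneg (mul_self_nonneg _) (jacobiWeight_pos hx).le
  · rintro x ⟨hx, hGx⟩
    rw [eval_mul]
    exact mul_pos (mul_self_pos.2 hGx) (jacobiWeight_pos hx)

lemma hasDerivAt_jacobiWeight_add_one {x : ℝ} (hx : x ∈ Set.Ioo (-1 : ℝ) 1) :
    HasDerivAt (jacobiWeight (α + 1) (β + 1))
      (((β + 1) * (1 - x) - (α + 1) * (1 + x)) * jacobiWeight α β x) x := by
  have hx₁ : 1 - x ≠ 0 := by linarith [hx.2]
  have hx₂ : 1 + x ≠ 0 := by linarith [hx.1]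
  refine ((((hasDerivAt_id x).const_sub 1).rpow_const (p := α + 1) (Or.inl hx₁)).mul
    (((hasDerivAt_id x).const_add 1).rpow_const (p := β + 1) (Or.inl hx₂))).congr_deriv ?_
  simp only [jacobiWeight, id_eq, add_sub_cancel_right, rpow_add_one hx₁, rpow_add_one hx₂]
  ring

theorem jacobiFunctional_pearson (hα : -1 < α) (hβ : -1 < β) (H : ℝ[X]) :
    jacobiFunctional hα hβ ((1 - X ^ 2) * derivative H +
      (C (β + 1) * (1 - X) - C (α + 1) * (1 + X)) * H) = 0 := by
  have hα₁ : 0 < α + 1 := by linarith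
  have hβ₁ : 0 < β + 1 := by linarith
  rw [jacobiFunctional_apply, ← integral_Ioc_eq_integral_Ioo,
    ← intervalIntegral.integral_of_le (by norm_num),
    intervalIntegral.integral_eq_sub_of_hasDerivAt_of_le (by norm_num)
      (f := fun x => jacobiWeight (α + 1) (β + 1) x * H.eval x)]
  · simp [jacobiWeight, hα₁.ne', hβ₁.ne']
  · exact ((continuous_jacobiWeight hα₁.le hβ₁.le).mul H.continuous).continuousOn
  · intro x hx
    refine ((hasDerivAt_jacobiWeight_add_one hx).mul (H.hasDerivAt x)).congr_deriv ?_
    have hx₁ : 1 - x ≠ 0 := by linarith [hx.2]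
    have hx₂ : 1 + x ≠ 0 := by linarith [hx.1]
    simp only [jacobiWeight, rpow_add_one hx₁, rpow_add_one hx₂, eval_add, eval_sub, eval_mul,
      eval_pow, eval_one, eval_X, eval_C]
    ring
  · exact (intervalIntegrable_iff_integrableOn_Icc_of_le (by norm_num)).2
      (integrableOn_eval_mul_jacobiWeight hα hβ _)

end JacobiWeight

section Equilibrium

open Polynomial

variable {ι : Type*} [Fintype ι]

/-- The unit charges at the points `z i` are in equilibrium under mutual logarithmic repulsion and
the field of charges `p` at `1` and `q` at `-1`. -/
def IsElectrostaticEquilibrium [DecidableEq ι] (p q : ℝ) (z : ι → ℝ) : Prop :=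
  ∀ i, q / (1 + z i) - p / (1 - z i) + ∑ j ∈ univ.erase i, 1 / (z i - z j) = 0

theorem isElectrostaticEquilibrium_of_isOrthogonalToLowerDegree [DecidableEq ι] {α β : ℝ}
    (hα : -1 < α) (hβ : -1 < β) {P : ℝ[X]} (hdeg : P.natDegree = Fintype.card ι)
    (hP : IsOrthogonalToLowerDegree (jacobiFunctional hα hβ) P) {z : ι → ℝ}
    (hz : Function.Injective z) (hroot : ∀ i, P.eval (z i) = 0)
    (hmem : ∀ i, z i ∈ Set.Ioo (-1 : ℝ) 1) :
    IsElectrostaticEquilibrium ((α + 1) / 2) ((β + 1) / 2) z := by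
  intro i
  have hP0 : P ≠ 0 := by
    rintro rfl
    exact (Fintype.card_pos_iff.2 ⟨i⟩).ne (natDegree_zero.symm.trans hdeg)
  have hstieltjes := (hP.nodal hP0 hdeg hz hroot).stieltjes_relation (by compute_degree)
    (by compute_degree) (jacobiFunctional_pearson hα hβ)
    (fun _ hG => (jacobiFunctional_mul_self_pos hα hβ hG).ne') hz i
  simp only [eval_sub, eval_add, eval_mul, eval_pow, eval_one, eval_X, eval_C] at hstieltjes
  have hz₁ : 1 - z i ≠ 0 := by linarith [(hmem i).2]
  have hz₂ : 1 + z i ≠ 0 := by linarith [(hmem i).1]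
  generalize ∑ j ∈ univ.erase i, 1 / (z i - z j) = σ at hstieltjes ⊢
  field_simp
  linear_combination hstieltjes

variable [LinearOrder ι]

/-- The index pairs `i < j` of the Vandermonde product. -/
def increasingPairs (ι : Type*) [Fintype ι] [LinearOrder ι] : Finset (ι × ι) :=
  univ.filter fun r => r.1 < r.2

lemma mem_increasingPairs {r : ι × ι} : r ∈ increasingPairs ι ↔ r.1 < r.2 := by
  simp [increasingPairs]

lemma sum_sum_erase_eq_sum_increasingPairs {M : Type*} [AddCommMonoid M] (f : ι → ι → M) :
    ∑ i, ∑ j ∈ univ.erase i, f i j = ∑ r ∈ increasingPairs ι, (f r.1 r.2 + f r.2 r.1) := by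
  have hsplit (i : ι) : ∑ j ∈ univ.erase i, f i j =
      (∑ j, if i < j then f i j else 0) + ∑ j, if j < i then f i j else 0 := by
    rw [← sum_filter, ← sum_filter, ← sum_union (disjoint_filter.2 fun _ _ => not_lt_of_gt)]
    exact sum_congr (by ext j; simp [ne_comm, lt_or_lt_iff_ne]) fun _ _ => rfl
  rw [sum_congr rfl fun i _ => hsplit i, sum_add_distrib,
    sum_comm (f := fun i j => ite (j < i) _ _), sum_add_distrib, increasingPairs, sum_filter,
    sum_filter, Fintype.sum_prod_type, Fintype.sum_prod_type]

lemma sum_increasingPairs_sub_div_sub {K : Type*} [Field K] (z d : ι → K) :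
    ∑ r ∈ increasingPairs ι, (d r.2 - d r.1) / (z r.2 - z r.1) =
      ∑ i, d i * ∑ j ∈ univ.erase i, 1 / (z i - z j) := by
  simp only [mul_sum]
  rw [sum_sum_erase_eq_sum_increasingPairs]
  refine sum_congr rfl fun r _ => ?_
  rw [← neg_sub (z r.2) (z r.1), div_neg]
  ring

lemma rpow_le_exp_mul_sub_one {r c : ℝ} (hr : 0 ≤ r) (hc : 0 ≤ c) : r ^ c ≤ exp (c * (r - 1)) := by
  rw [mul_comm, exp_mul]
  exact rpow_le_rpow hr (by linarith [add_one_le_exp (r - 1)]) hc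

lemma rpow_lt_exp_mul_sub_one {r c : ℝ} (hr : 0 ≤ r) (hc : 0 < c) (hr1 : r ≠ 1) :
    r ^ c < exp (c * (r - 1)) := by
  rw [mul_comm, exp_mul]
  exact rpow_lt_rpow hr (by linarith [add_one_lt_exp (sub_ne_zero.2 hr1)]) hc

lemma prod_rpow_lt_one {τ : Type*} {s : Finset τ} {r c : τ → ℝ} (hr : ∀ k ∈ s, 0 ≤ r k)
    (hc : ∀ k ∈ s, 0 < c k) (hsum : ∑ k ∈ s, c k * (r k - 1) ≤ 0) (hne : ∃ k ∈ s, r k ≠ 1) :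
    ∏ k ∈ s, r k ^ c k < 1 := by
  by_cases hzero : ∃ k ∈ s, r k = 0
  · obtain ⟨k, hk, hrk⟩ := hzero
    rw [prod_eq_zero hk (by rw [hrk, zero_rpow (hc k hk).ne'])]
    exact one_pos
  have hpos (k) (hk : k ∈ s) : 0 < r k := (hr k hk).lt_of_ne' fun h => hzero ⟨k, hk, h⟩
  obtain ⟨k₀, hk₀, hrk₀⟩ := hne
  calc ∏ k ∈ s, r k ^ c k < ∏ k ∈ s, exp (c k * (r k - 1)) :=
        prod_lt_prod (fun k hk => rpow_pos_of_pos (hpos k hk) _)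
          (fun k hk => rpow_le_exp_mul_sub_one (hr k hk) (hc k hk).le)
          ⟨k₀, hk₀, rpow_lt_exp_mul_sub_one (hr k₀ hk₀) (hc k₀ hk₀) hrk₀⟩
    _ = exp (∑ k ∈ s, c k * (r k - 1)) := (exp_sum _ _).symm
    _ ≤ 1 := exp_le_one_iff.2 hsum

lemma prod_rpow_lt_prod_rpow {τ : Type*} {s : Finset τ} {u v c : τ → ℝ} (hu : ∀ k ∈ s, 0 ≤ u k)
    (hv : ∀ k ∈ s, 0 < v k) (hc : ∀ k ∈ s, 0 < c k)
    (hsum : ∑ k ∈ s, c k * ((u k - v k) / v k) ≤ 0) (hne : ∃ k ∈ s, u k ≠ v k) :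
    ∏ k ∈ s, u k ^ c k < ∏ k ∈ s, v k ^ c k := by
  have hratio : ∏ k ∈ s, (u k / v k) ^ c k < 1 := by
    refine prod_rpow_lt_one (fun k hk => div_nonneg (hu k hk) (hv k hk).le) hc
      (hsum.trans_eq' (sum_congr rfl fun k hk => ?_)) ?_
    · rw [sub_div, div_self (hv k hk).ne']
    · obtain ⟨k, hk, huv⟩ := hne
      exact ⟨k, hk, fun h => huv ((div_eq_one_iff_eq (hv k hk).ne').1 h)⟩
  rwa [prod_congr rfl fun k hk => div_rpow (hu k hk) (hv k hk).le (c k), prod_div_distrib,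
    div_lt_one (prod_pos fun k hk => rpow_pos_of_pos (hv k hk) _)] at hratio

/-- The function whose `κ`-th power carries the `κ`-dependence of the Jacobi ensemble. Its logarithm
is minus the energy of the electrostatic configuration `x`. -/
noncomputable def jacobiPeak (p q : ℝ) (x : ι → ℝ) : ℝ :=
  (∏ r ∈ increasingPairs ι, (x r.2 - x r.1)) * ∏ i, jacobiWeight p q (x i)

lemma continuous_jacobiPeak {p q : ℝ} (hp : 0 ≤ p) (hq : 0 ≤ q) :
    Continuous (jacobiPeak p q : (ι → ℝ) → ℝ) := by
  have := continuous_jacobiWeight hp hq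
  unfold jacobiPeak
  fun_prop

/-- The alcove of ordered configurations in `[-1, 1]`. -/
def jacobiAlcove (ι : Type*) [LinearOrder ι] : Set (ι → ℝ) :=
  {x | Monotone x ∧ ∀ i, x i ∈ Set.Icc (-1 : ℝ) 1}

lemma sub_nonneg_of_mem_jacobiAlcove {x : ι → ℝ} (hx : x ∈ jacobiAlcove ι) {r : ι × ι}
    (hr : r ∈ increasingPairs ι) : 0 ≤ x r.2 - x r.1 :=
  sub_nonneg.2 (hx.1 (mem_increasingPairs.1 hr).le)

lemma jacobiPeak_nonneg {p q : ℝ} {x : ι → ℝ} (hx : x ∈ jacobiAlcove ι) : 0 ≤ jacobiPeak p q x :=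
  mul_nonneg (prod_nonneg fun _ hr => sub_nonneg_of_mem_jacobiAlcove hx hr)
    (prod_nonneg fun i _ => jacobiWeight_nonneg (hx.2 i))

lemma jacobiPeak_pos {p q : ℝ} {z : ι → ℝ} (hz : StrictMono z)
    (hmem : ∀ i, z i ∈ Set.Ioo (-1 : ℝ) 1) : 0 < jacobiPeak p q z :=
  mul_pos (prod_pos fun _ hr => sub_pos.2 (hz (mem_increasingPairs.1 hr)))
    (prod_pos fun i _ => jacobiWeight_pos (hmem i))

lemma jacobiPeak_eq_prod_disjSum (p q : ℝ) (x : ι → ℝ) :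
    jacobiPeak p q x = ∏ k ∈ (increasingPairs ι).disjSum (univ.disjSum univ),
      Sum.elim (fun r => x r.2 - x r.1) (Sum.elim (fun i => 1 - x i) fun i => 1 + x i) k ^
        (Sum.elim (fun _ => 1) (Sum.elim (fun _ => p) fun _ => q) k : ℝ) := by
  simp [jacobiPeak, jacobiWeight, prod_disjSum, prod_mul_distrib]

theorem jacobiPeak_lt_of_isElectrostaticEquilibrium {p q : ℝ} (hp : 0 < p) (hq : 0 < q)
    {z y : ι → ℝ} (hz : StrictMono z) (hmem : ∀ i, z i ∈ Set.Ioo (-1 : ℝ) 1)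
    (heq : IsElectrostaticEquilibrium p q z) (hy : y ∈ jacobiAlcove ι) (hyz : y ≠ z) :
    jacobiPeak p q y < jacobiPeak p q z := by
  rw [jacobiPeak_eq_prod_disjSum, jacobiPeak_eq_prod_disjSum]
  refine prod_rpow_lt_prod_rpow ?_ ?_ ?_ (le_of_eq ?_) ?_
  · rintro (r | i | i) hk
    · exact sub_nonneg_of_mem_jacobiAlcove hy (inl_mem_disjSum.1 hk)
    · exact sub_nonneg.2 (hy.2 i).2
    · exact neg_le_iff_add_nonneg'.1 (hy.2 i).1
  · rintro (r | i | i) hk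
    · exact sub_pos.2 (hz (mem_increasingPairs.1 (inl_mem_disjSum.1 hk)))
    · exact sub_pos.2 (hmem i).2
    · exact neg_lt_iff_pos_add'.1 (hmem i).1
  · rintro (r | i | i) _
    exacts [one_pos, hp, hq]
  · have hpairs : ∑ r ∈ increasingPairs ι, (y r.2 - y r.1 - (z r.2 - z r.1)) / (z r.2 - z r.1) =
        ∑ i, (y i - z i) * ∑ j ∈ univ.erase i, 1 / (z i - z j) := by
      rw [← sum_increasingPairs_sub_div_sub z fun i => y i - z i]
      exact sum_congr rfl fun r _ => by ring
    simp only [sum_disjSum, Sum.elim_inl, Sum.elim_inr, one_mul, hpairs]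
    rw [← sum_add_distrib, ← sum_add_distrib]
    exact sum_eq_zero fun i _ => by linear_combination (y i - z i) * heq i
  · obtain ⟨i, hi⟩ := Function.ne_iff.1 hyz
    exact ⟨Sum.inr (Sum.inr i), by simp, by simpa using hi⟩

end Equilibrium

section JacobiEnsemble

open Polynomial

lemma isOpen_setOf_strictMono {ι α : Type*} [Finite ι] [Preorder ι] [TopologicalSpace α]
    [LinearOrder α] [OrderClosedTopology α] : IsOpen {x : ι → α | StrictMono x} := by
  have hset : {x : ι → α | StrictMono x} = ⋂ (i) (j) (_ : i < j), {x | x i < x j} := by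
    ext x
    simp [StrictMono]
  rw [hset]
  exact isOpen_iInter_of_finite fun i => isOpen_iInter_of_finite fun j =>
    isOpen_iInter_of_finite fun _ => isOpen_lt (continuous_apply i) (continuous_apply j)

lemma integrableOn_pi_prod_jacobiWeight {ι : Type*} [Fintype ι] {α β : ℝ} (hα : -1 < α)
    (hβ : -1 < β) :
    IntegrableOn (fun x : ι → ℝ => ∏ i, jacobiWeight α β (x i))
      (Set.univ.pi fun _ => Set.Icc (-1) 1) := by
  rw [IntegrableOn, volume_pi, Measure.restrict_pi_pi]
  exact Integrable.fintype_prod fun _ => integrableOn_jacobiWeight hα hβ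

lemma isCompact_jacobiAlcove {ι : Type*} [LinearOrder ι] : IsCompact (jacobiAlcove ι) := by
  have hset : jacobiAlcove ι = {x | Monotone x} ∩ Set.univ.pi fun _ => Set.Icc (-1 : ℝ) 1 :=
    Set.ext fun x => and_congr_right' (by simp only [Set.mem_pi, Set.mem_univ, true_implies])
  rw [hset]
  exact (isCompact_univ_pi fun _ => isCompact_Icc).inter_left isClosed_monotone

variable {ι : Type*} [Fintype ι] [LinearOrder ι] {α β : ℝ}

lemma integrableOn_jacobiAlcove_prod_jacobiWeight (hα : -1 < α) (hβ : -1 < β) :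
    IntegrableOn (fun x : ι → ℝ => ∏ i, jacobiWeight α β (x i)) (jacobiAlcove ι) :=
  (integrableOn_pi_prod_jacobiWeight hα hβ).mono_set fun _ hx i _ => hx.2 i

lemma setIntegral_prod_jacobiWeight_pos (hα : -1 < α) (hβ : -1 < β) {z : ι → ℝ}
    (hz : StrictMono z) (hmem : ∀ i, z i ∈ Set.Ioo (-1 : ℝ) 1) {U : Set (ι → ℝ)} (hU : IsOpen U)
    (hzU : z ∈ U) : 0 < ∫ x in jacobiAlcove ι ∩ U, ∏ i, jacobiWeight α β (x i) := by
  have hopen : IsOpen (({x | StrictMono x} ∩ Set.univ.pi fun _ => Set.Ioo (-1 : ℝ) 1) ∩ U) :=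
    (isOpen_setOf_strictMono.inter (isOpen_set_pi Set.finite_univ fun _ _ => isOpen_Ioo)).inter hU
  refine setIntegral_pos_of_isOpen_of_pos
    (isCompact_jacobiAlcove.measurableSet.inter hU.measurableSet) hopen
    ⟨z, ⟨hz, fun i _ => hmem i⟩, hzU⟩ ?_
    ((integrableOn_jacobiAlcove_prod_jacobiWeight hα hβ).mono_set Set.inter_subset_left) ?_ ?_
  · exact Set.inter_subset_inter_left U fun x hx =>
      ⟨hx.1.monotone, fun i => Set.Ioo_subset_Icc_self (hx.2 i trivial)⟩
  · exact fun x hx => prod_nonneg fun i _ => jacobiWeight_nonneg (hx.1.2 i)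
  · exact fun x hx => prod_pos fun i _ => jacobiWeight_pos (hx.1.2 i trivial)

/-- The unnormalized density of the `β`-Jacobi ensemble with coupling `κ`, in terms of the
parameters `α = a + b - 1` and `β = b - 1` of the associated Jacobi polynomials. -/
noncomputable def jacobiDensity (α β κ : ℝ) (x : ι → ℝ) : ℝ :=
  (∏ r ∈ increasingPairs ι, (x r.2 - x r.1) ^ κ) *
    ∏ i, jacobiWeight (κ * (α + 1) / 2 - 1 / 2) (κ * (β + 1) / 2 - 1 / 2) (x i)

/-- Where an exponent of the weight on the left vanishes the two sides differ at an endpoint: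
`0 ^ 0 = 1`, whereas the right side is `0`. -/
lemma jacobiDensity_eq_jacobiPeak_rpow_mul {κ : ℝ} {x : ι → ℝ} (hx : x ∈ jacobiAlcove ι)
    (hα : κ * (α + 1) / 2 - 1 / 2 ≠ 0) (hβ : κ * (β + 1) / 2 - 1 / 2 ≠ 0) :
    jacobiDensity α β κ x = jacobiPeak ((α + 1) / 2) ((β + 1) / 2) x ^ κ *
      ∏ i, jacobiWeight (-1 / 2) (-1 / 2) (x i) := by
  have hexp (γ : ℝ) : (γ + 1) / 2 * κ + -1 / 2 = κ * (γ + 1) / 2 - 1 / 2 := by ring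
  have hweight (i : ι) : jacobiWeight ((α + 1) / 2) ((β + 1) / 2) (x i) ^ κ *
      jacobiWeight (-1 / 2) (-1 / 2) (x i) =
        jacobiWeight (κ * (α + 1) / 2 - 1 / 2) (κ * (β + 1) / 2 - 1 / 2) (x i) := by
    rw [jacobiWeight_rpow_mul_jacobiWeight (hx.2 i) (by rwa [hexp]) (by rwa [hexp]), hexp, hexp]
  have hpairs := fun r hr => sub_nonneg_of_mem_jacobiAlcove hx (r := r) hr
  have hweights : ∀ i ∈ univ, 0 ≤ jacobiWeight ((α + 1) / 2) ((β + 1) / 2) (x i) :=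
    fun i _ => jacobiWeight_nonneg (hx.2 i)
  rw [jacobiDensity, jacobiPeak, mul_rpow (prod_nonneg hpairs) (prod_nonneg hweights),
    ← finsetProd_rpow _ _ hpairs, ← finsetProd_rpow _ _ hweights, mul_assoc, ← prod_mul_distrib,
    prod_congr rfl fun i _ => hweight i]

lemma eventually_mul_div_two_sub_half_ne_zero {γ : ℝ} (hγ : -1 < γ) :
    ∀ᶠ κ : ℝ in atTop, κ * (γ + 1) / 2 - 1 / 2 ≠ 0 := by
  have hγ₁ : 0 < γ + 1 := by linarith
  filter_upwards [eventually_gt_atTop (1 / (γ + 1))] with κ hκ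
  rw [div_lt_iff₀ hγ₁] at hκ
  linarith

theorem tendsto_jacobiDensity_of_isElectrostaticEquilibrium (hα : -1 < α) (hβ : -1 < β)
    {z : ι → ℝ} (hz : StrictMono z) (hmem : ∀ i, z i ∈ Set.Ioo (-1 : ℝ) 1)
    (heq : IsElectrostaticEquilibrium ((α + 1) / 2) ((β + 1) / 2) z) {ε : ℝ} (hε : 0 < ε) :
    Tendsto (fun κ : ℝ => (∫ x in {x ∈ jacobiAlcove ι | ε < dist x z}, jacobiDensity α β κ x) /
      ∫ x in jacobiAlcove ι, jacobiDensity α β κ x) atTop (𝓝 0) := by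
  have hα₁ : 0 < (α + 1) / 2 := by linarith
  have hβ₁ : 0 < (β + 1) / 2 := by linarith
  have hA : IsCompact (jacobiAlcove ι) := isCompact_jacobiAlcove
  have hS : MeasurableSet {x ∈ jacobiAlcove ι | ε < dist x z} :=
    hA.measurableSet.inter
      (isOpen_lt continuous_const (continuous_id.dist continuous_const)).measurableSet
  have hSA : {x ∈ jacobiAlcove ι | ε < dist x z} ⊆ jacobiAlcove ι := fun _ hx => hx.1
  have hzS : z ∉ closure {x ∈ jacobiAlcove ι | ε < dist x z} := fun hcl => by
    have hle : ε ≤ dist z z := closure_minimal (t := {x | ε ≤ dist x z}) (fun _ hx => hx.2.le)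
      (isClosed_le (by fun_prop) (by fun_prop)) hcl
    exact hε.not_ge (by simpa using hle)
  refine (tendsto_setIntegral_rpow_mul_div_of_unique_max hA
    (continuous_jacobiPeak hα₁.le hβ₁.le).continuousOn
    (integrableOn_jacobiAlcove_prod_jacobiWeight (α := -1 / 2) (β := -1 / 2) (by norm_num)
      (by norm_num))
    (fun _ hx => jacobiPeak_nonneg hx)
    (fun x hx => prod_nonneg fun i _ => jacobiWeight_nonneg (hx.2 i))
    ⟨hz.monotone, fun i => Set.Ioo_subset_Icc_self (hmem i)⟩ (jacobiPeak_pos hz hmem)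
    (fun U => setIntegral_prod_jacobiWeight_pos (by norm_num) (by norm_num) hz hmem)
    (fun y => jacobiPeak_lt_of_isElectrostaticEquilibrium hα₁ hβ₁ hz hmem heq)
    hS hSA hzS).congr' ?_
  filter_upwards [eventually_mul_div_two_sub_half_ne_zero hα,
    eventually_mul_div_two_sub_half_ne_zero hβ] with κ hκα hκβ
  have hfactor : ∀ x ∈ jacobiAlcove ι, jacobiPeak ((α + 1) / 2) ((β + 1) / 2) x ^ κ *
      ∏ i, jacobiWeight (-1 / 2) (-1 / 2) (x i) = jacobiDensity α β κ x :=
    fun _ hx => (jacobiDensity_eq_jacobiPeak_rpow_mul hx hκα hκβ).symm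
  rw [setIntegral_congr_fun hS fun x hx => hfactor x (hSA hx),
    setIntegral_congr_fun hA.measurableSet hfactor]

theorem jacobi_ensemble_convergence_in_probability_general {N : ℕ} (hα : -1 < α) (hβ : -1 < β)
    {P : ℝ[X]} (hPdeg : P.natDegree = N)
    (hPorth : ∀ Q : ℝ[X], Q.natDegree < N →
      ∫ x in Set.Ioo (-1 : ℝ) 1, P.eval x * Q.eval x * (1 - x) ^ α * (1 + x) ^ β = 0)
    {z : Fin N → ℝ} (hzmono : StrictMono z) (hzroot : ∀ i, P.eval (z i) = 0)
    (hzmem : ∀ i, z i ∈ Set.Ioo (-1 : ℝ) 1) {ε : ℝ} (hε : 0 < ε) :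
    Tendsto (fun κ : ℝ =>
        (∫ x in {x ∈ jacobiAlcove (Fin N) | ε < dist x z}, jacobiDensity α β κ x) /
          ∫ x in jacobiAlcove (Fin N), jacobiDensity α β κ x)
      atTop (𝓝 0) := by
  have hP : IsOrthogonalToLowerDegree (jacobiFunctional hα hβ) P := fun Q hQ => by
    simpa only [jacobiFunctional_apply, jacobiWeight, eval_mul, mul_assoc] using
      hPorth Q (hPdeg ▸ hQ)
  exact tendsto_jacobiDensity_of_isElectrostaticEquilibrium hα hβ hzmono hzmem
    (isElectrostaticEquilibrium_of_isOrthogonalToLowerDegree hα hβ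
      (hPdeg.trans (Fintype.card_fin N).symm) hP hzmono.injective hzroot hzmem) hε

end JacobiEnsemble

theorem jacobi_ensemble_convergence_in_probability
    (N : ℕ) (hN : 1 ≤ N) (a b : ℝ) (ha : 0 ≤ a) (hb : 0 < b)
    (α β : ℝ) (hα : α = a + b - 1) (hβ : β = b - 1)
    (P : Polynomial ℝ) (hPdeg : P.natDegree = N)
    (hPorth : ∀ Q : Polynomial ℝ, Q.natDegree < N →
      ∫ x in Set.Ioo (-1 : ℝ) 1,
        P.eval x * Q.eval x * (1 - x) ^ α * (1 + x) ^ β = 0)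
    (hPone : P.eval 1 = (∏ j ∈ Finset.range N, (α + 1 + j)) / (N.factorial : ℝ))
    (z : Fin N → ℝ) (hzmono : StrictMono z)
    (hzroot : ∀ i, P.eval (z i) = 0)
    (hzmem : ∀ i, z i ∈ Set.Ioo (-1 : ℝ) 1)
    (A : Set (Fin N → ℝ))
    (hA : A = {x | Monotone x ∧ ∀ i, x i ∈ Set.Icc (-1 : ℝ) 1})
    (w : ℝ → (Fin N → ℝ) → ℝ)
    (hw : w = fun κ x =>
      (∏ p ∈ Finset.univ.filter (fun p : Fin N × Fin N => p.1 < p.2), (x p.2 - x p.1) ^ κ) *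
      ∏ i, ((1 - x i) ^ (κ * (a + b) / 2 - 1 / 2) * (1 + x i) ^ (κ * b / 2 - 1 / 2)))
    : ∀ ε : ℝ, 0 < ε →
      Tendsto (fun κ : ℝ =>
          (∫ x in {x ∈ A | ε < dist x z}, w κ x) / (∫ x in A, w κ x))
        atTop (𝓝 0) := by
  subst hα hβ hA hw
  intro ε hε
  simpa only [jacobiDensity, jacobiWeight, jacobiAlcove, increasingPairs, sub_add_cancel] using
    jacobi_ensemble_convergence_in_probability_general (α := a + b - 1) (β := b - 1)
      (by linarith) (by linarith) hPdeg hPorth hzmono hzroot hzmem hε
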